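/- Let G be the binary recurrence sequence with parameters A = 1, B = 1 and initial values G_0 = 7, G_1 = 3 (so G_{n+2} = G_{n+1} + G_n). Then for every prime q ∈ {3, 5, 7, 11, 13, 17}, the sequence contains no q-th powers: there are no n ≥ 0 and x ∈ ℤ with G_n = x^q. -/

import Mathlib

/-!
Fix the exponent `q` and consider primes `p ≡ 1 (mod q)`. A nonzero `q`-th power `a` modulo `p`
satisfies `a ^ ((p - 1) / q) = 1` by Fermat's little theorem, while the sequence is periodic
modulo `p`. Hence, given a common period `M` of the sequence modulo finitely many such `p`, it is
enough that for each residue class `r` modulo `M` one of the primes rules out that `G r` is a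
`q`-th power. For each of the six exponents one or two primes, chosen so that the periods modulo
them are small, suffice.
-/

section BinaryRecurrence

variable {R S : Type*} [Semiring R] [Semiring S] {A B : R} {G : ℕ → R}

/-- `G` is a binary recurrence sequence with parameters `A` and `B`; its initial values are `G 0`
and `G 1`. -/
def IsBinaryRecurrence (A B : R) (G : ℕ → R) : Prop :=
  ∀ n, G (n + 2) = A * G (n + 1) + B * G n

/-- The companion map of the recurrence, sending a pair of consecutive terms to the next such
pair. Iterating it computes the sequence in linear time, and a period of the sequence is a period
of the initial pair under this map. -/
def recurrenceStep (A B : R) (s : R × R) : R × R :=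
  (s.2, A * s.2 + B * s.1)

namespace IsBinaryRecurrence

theorem map (hG : IsBinaryRecurrence A B G) (f : R →+* S) :
    IsBinaryRecurrence (f A) (f B) (f ∘ G) := fun n => by
  simp only [Function.comp_apply, hG n, map_add, map_mul]

theorem iterate_recurrenceStep (hG : IsBinaryRecurrence A B G) (n : ℕ) :
    (recurrenceStep A B)^[n] (G 0, G 1) = (G n, G (n + 1)) := by
  induction n with
  | zero => rfl
  | succ n ih => rw [Function.iterate_succ_apply', ih, recurrenceStep, hG n]

theorem iterate_mod_recurrenceStep (hG : IsBinaryRecurrence A B G) {M : ℕ}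
    (hM : Function.IsPeriodicPt (recurrenceStep A B) M (G 0, G 1)) (n : ℕ) :
    (recurrenceStep A B)^[n % M] (G 0, G 1) = (G n, G (n + 1)) :=
  (hM.iterate_mod_apply n).trans (hG.iterate_recurrenceStep n)

end IsBinaryRecurrence

end BinaryRecurrence

theorem pow_pow_card_sub_one_div_eq_one {K : Type*} [Field K] [Fintype K] {q : ℕ}
    (hq : q ∣ Fintype.card K - 1) {x : K} (hx : x ^ q ≠ 0) :
    (x ^ q) ^ ((Fintype.card K - 1) / q) = 1 := by
  have hq0 : q ≠ 0 := ne_zero_of_dvd_ne_zero (Nat.sub_ne_zero_of_lt Fintype.one_lt_card) hq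
  rw [← pow_mul, Nat.mul_div_cancel' hq,
    FiniteField.pow_card_sub_one_eq_one x ((pow_ne_zero_iff hq0).mp hx)]

/-- The decidable criterion that certifies that `a` is not a `q`-th power modulo a prime `p` with
`q ∣ p - 1`. An abbreviation, so that its decidability is found by unfolding. -/
abbrev IsPowNonresidue {p : ℕ} (q : ℕ) (a : ZMod p) : Prop :=
  a ≠ 0 ∧ a ^ ((p - 1) / q) ≠ 1

theorem IsPowNonresidue.ne_pow {p q : ℕ} [Fact p.Prime] (hq : q ∣ p - 1) {a : ZMod p}
    (ha : IsPowNonresidue q a) (x : ZMod p) : a ≠ x ^ q := by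
  rintro rfl
  have hpow := pow_pow_card_sub_one_div_eq_one (by rwa [ZMod.card]) ha.1
  rw [ZMod.card] at hpow
  exact ha.2 hpow

/-- A finite certificate that the binary recurrence sequence with parameters `A`, `B` and initial
values `u`, `v` contains no `q`-th powers: `M` is a period of the sequence modulo every prime in
`P`, and each index `r < M` is excluded by one of these primes. Terms are given as iterates of
`recurrenceStep` in `ZMod p`, which makes the last two fields checkable by evaluation. -/
structure IsPowerSieve (A B u v : ℤ) (q M : ℕ) (P : Finset ℕ) : Prop where
  pos : 0 < M
  prime : ∀ p ∈ P, p.Prime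
  dvd_sub_one : ∀ p ∈ P, q ∣ p - 1
  isPeriodicPt : ∀ p ∈ P,
    Function.IsPeriodicPt (recurrenceStep (A : ZMod p) (B : ZMod p)) M (u, v)
  exists_isPowNonresidue : ∀ r < M, ∃ p ∈ P,
    IsPowNonresidue q ((recurrenceStep (A : ZMod p) (B : ZMod p))^[r] (u, v)).1

theorem IsPowerSieve.ne_pow {A B : ℤ} {G : ℕ → ℤ} {q M : ℕ} {P : Finset ℕ}
    (hP : IsPowerSieve A B (G 0) (G 1) q M P) (hG : IsBinaryRecurrence A B G) (n : ℕ) (x : ℤ) :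
    G n ≠ x ^ q := by
  intro hx
  obtain ⟨p, hp, hnonres⟩ := hP.exists_isPowNonresidue (n % M) (Nat.mod_lt n hP.pos)
  have : Fact p.Prime := ⟨hP.prime p hp⟩
  have hmod : ((recurrenceStep (A : ZMod p) (B : ZMod p))^[n % M] (G 0, G 1)).1 =
      (x : ZMod p) ^ q :=
    calc
      _ = (G n : ZMod p) := congrArg Prod.fst <|
        (hG.map (Int.castRingHom (ZMod p))).iterate_mod_recurrenceStep (hP.isPeriodicPt p hp) n
      _ = (x : ZMod p) ^ q := by rw [hx, Int.cast_pow]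
  exact hnonres.ne_pow (hP.dvd_sub_one p hp) x hmod

theorem exists_isPowerSieve_one_one_seven_three {q : ℕ}
    (hq : q ∈ ({3, 5, 7, 11, 13, 17} : Finset ℕ)) : ∃ M P, IsPowerSieve 1 1 7 3 q M P := by
  simp only [Finset.mem_insert, Finset.mem_singleton] at hq
  rcases hq with rfl | rfl | rfl | rfl | rfl | rfl
  · exact ⟨108, {19, 109}, by norm_num, by norm_num, by norm_num, by decide +kernel,
      by decide +kernel⟩
  · exact ⟨40, {11, 41}, by norm_num, by norm_num, by norm_num, by decide +kernel,
      by decide +kernel⟩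
  · exact ⟨56, {29, 281}, by norm_num, by norm_num, by norm_num, by decide +kernel,
      by decide +kernel⟩
  · exact ⟨44, {89}, by norm_num, by norm_num, by norm_num, by decide +kernel,
      by decide +kernel⟩
  · exact ⟨78, {79, 521}, by norm_num, by norm_num, by norm_num, by decide +kernel,
      by decide +kernel⟩
  · exact ⟨102, {919, 3469}, by norm_num, by norm_num, by norm_num, by decide +kernel,
      by decide +kernel⟩

/-- The binary recurrence sequence with `G 0 = 7`, `G 1 = 3` and
`G (n+2) = G (n + 1) + G n` contains no `q`-th powers for any prime
`q ∈ {3, 5, 7, 11, 13, 17}`. -/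
theorem no_powers_A1_B1_u7_v3
    (G : ℕ → ℤ) (hG0 : G 0 = 7) (hG1 : G 1 = 3)
    (hGrec : ∀ n : ℕ, G (n + 2) = G (n + 1) + G n) :
    ∀ q ∈ ({3, 5, 7, 11, 13, 17} : Finset ℕ), Nat.Prime q →
      ¬ ∃ (n : ℕ) (x : ℤ), G n = x ^ q := by
  rintro q hq - ⟨n, x, hx⟩
  have hG : IsBinaryRecurrence 1 1 G := fun n => by rw [one_mul, one_mul, hGrec]
  obtain ⟨M, P, hP⟩ := exists_isPowerSieve_one_one_seven_three hq
  rw [← hG0, ← hG1] at hP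
  exact hP.ne_pow hG n x hx
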